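/- The Copeland–Erdős number 0.2357111317…, i.e., the real number whose decimal digit sequence is obtained by concatenating the base-10 expansions of the prime numbers 2, 3, 5, 7, 11, 13, … in increasing order, is normal to base 10. -/

import Mathlib

open Filter

/-- Number of (possibly overlapping) occurrences of the string `σ` as a contiguous
substring of the string `w` (strings are lists of decimal digits). -/
def nu (w σ : List ℕ) : ℕ :=
  ((Finset.range w.length).filter (fun i => σ <+: w.drop i)).card

/-- The string of base-`g` digits of `a`, most significant digit first. -/
def digs (g a : ℕ) : List ℕ :=
  (Nat.digits g a).reverse

/-- The `N`-th digit (indexed from `0`) of the infinite base-`g` digit sequence obtained by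
concatenating the digit strings of `a 1`, `a 2`, `a 3`, … . -/
def concatDigit (g : ℕ) (a : ℕ → ℕ) (N : ℕ) : ℕ :=
  (((List.range (N + 1)).map (fun n => digs g (a (n + 1)))).flatten).getD N 0

/-- An infinite sequence `x` of base-`g` digits is normal to base `g` if for every nonempty
string `σ` of base-`g` digits, the frequency of occurrences of `σ` among the first `N` digits
tends to `g^{-|σ|}`. -/
def IsNormalSeq (g : ℕ) (x : ℕ → ℕ) : Prop :=
  ∀ σ : List ℕ, σ ≠ [] → (∀ d ∈ σ, d < g) →
    Tendsto (fun N : ℕ => (nu ((List.range N).map x) σ : ℝ) / (N : ℝ)) atTop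
      (nhds (1 / (g : ℝ) ^ σ.length))

lemma ce_sum_mul (A M : ℕ) (g : ℕ → ℝ) :
    ∑ n ∈ Finset.range (A * M), g n
      = ∑ b ∈ Finset.range A, ∑ a ∈ Finset.range M, g (b * M + a) := by
  induction A with
  | zero => simp
  | succ A ih => rw [Nat.succ_mul, Finset.sum_range_add, ih, Finset.sum_range_succ]

lemma ce_mgf (M : ℕ) (hM : 0 < M) (f : ℕ → ℝ) (q : ℕ) :
    ∑ n ∈ Finset.range (M ^ q), ∏ j ∈ Finset.range q, f (n / M ^ j % M)
      = (∑ a ∈ Finset.range M, f a) ^ q := by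
  induction q with
  | zero => simp
  | succ q ih =>
    rw [pow_succ M, ce_sum_mul, pow_succ, ← ih, Finset.sum_mul_sum]
    refine Finset.sum_congr rfl fun b _ => Finset.sum_congr rfl fun a ha => ?_
    have ha : a < M := Finset.mem_range.1 ha
    rw [Finset.prod_range_succ']
    congr 1
    · refine Finset.prod_congr rfl fun j _ => ?_
      rw [pow_succ', ← Nat.div_div_eq_div_mul]
      congr 3
      rw [mul_comm, Nat.mul_add_div hM, Nat.div_eq_of_lt ha, add_zero]
    · congr 1
      rw [pow_zero, Nat.div_one, mul_comm, Nat.mul_add_mod, Nat.mod_eq_of_lt ha]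

/-- number of j < q with base-M digit number j of n equal to s -/
def ceT (M s q n : ℕ) : ℝ := ∑ j ∈ Finset.range q, if n / M ^ j % M = s then (1:ℝ) else 0

lemma ce_tail (M s q : ℕ) (hs : s < M) (ε u : ℝ) (he : 0 < ε) (he1 : ε ≤ 1) (hu : |u| = 1) :
    (((Finset.range (M ^ q)).filter (fun n => ε * q < u * (ceT M s q n - q / M))).card : ℝ)
      ≤ M ^ q * Real.exp (- (ε ^ 2 / 4) * q) := by
  have hM : 0 < M := by omega
  have hM' : (0:ℝ) < M := by exact_mod_cast hM
  have hM1 : (1:ℝ) / M ≤ 1 := by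
    rw [div_le_one hM']; exact_mod_cast hM
  have hM0 : (0:ℝ) < 1 / M := by positivity
  set t := ε / 2 with ht
  set X : ℕ → ℝ := fun a => (if a = s then (1:ℝ) else 0) - 1 / M with hX
  have hX1 : ∀ a, |X a| ≤ 1 := by
    intro a
    simp only [hX]
    rw [abs_le]
    split_ifs <;> constructor <;> linarith
  have hX0 : ∑ a ∈ Finset.range M, X a = 0 := by
    simp only [hX, Finset.sum_sub_distrib, Finset.sum_ite_eq', Finset.mem_range, hs, if_true,
      Finset.sum_const, Finset.card_range, nsmul_eq_mul]
    field_simp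
    ring
  have hf : ∀ a, Real.exp (t * u * X a) ≤ 1 + t * u * X a + t ^ 2 := by
    intro a
    have h1 : |t * u * X a| ≤ t := by
      rw [abs_mul, abs_mul, hu, abs_of_pos (by positivity : 0 < t), mul_one]
      have := hX1 a
      have : 0 < t := by positivity
      nlinarith
    have h2 := Real.abs_exp_sub_one_sub_id_le (x := t * u * X a) (by linarith)
    have h3 := (abs_le.1 h2).2
    have h4 : (t * u * X a) ^ 2 ≤ t ^ 2 := by
      rw [← sq_abs]; exact pow_le_pow_left₀ (abs_nonneg _) h1 2
    linarith
  have hsum : ∑ a ∈ Finset.range M, Real.exp (t * u * X a) ≤ M * Real.exp (t ^ 2) := by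
    calc _ ≤ ∑ a ∈ Finset.range M, (1 + t * u * X a + t ^ 2) := Finset.sum_le_sum fun a _ => hf a
      _ = M * (t ^ 2 + 1) := by
        rw [Finset.sum_add_distrib, Finset.sum_add_distrib, ← Finset.mul_sum, hX0]
        simp; ring
      _ ≤ _ := by gcongr; exact Real.add_one_le_exp _
  have hS : ∀ n, ceT M s q n - q / M = ∑ j ∈ Finset.range q, X (n / M ^ j % M) := by
    intro n
    simp only [hX, ceT, Finset.sum_sub_distrib]
    simp
    ring
  have key : ∑ n ∈ Finset.range (M ^ q), Real.exp (t * u * (ceT M s q n - q / M))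
      ≤ (M * Real.exp (t ^ 2)) ^ q := by
    have : ∀ n, Real.exp (t * u * (ceT M s q n - q / M))
       = ∏ j ∈ Finset.range q, Real.exp (t * u * X (n / M ^ j % M)) := by
      intro n
      rw [hS, Finset.mul_sum, Real.exp_sum]
    simp_rw [this]
    rw [ce_mgf M hM (fun a => Real.exp (t * u * X a))]
    exact pow_le_pow_left₀ (Finset.sum_nonneg fun a _ => (Real.exp_pos _).le) hsum q
  have low : (((Finset.range (M ^ q)).filter
      (fun n => ε * q < u * (ceT M s q n - q / M))).card : ℝ) * Real.exp (t * (ε * q))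
      ≤ ∑ n ∈ Finset.range (M ^ q), Real.exp (t * u * (ceT M s q n - q / M)) := by
    rw [← nsmul_eq_mul, ← Finset.sum_const]
    refine (Finset.sum_le_sum (fun n hn => ?_)).trans
      (Finset.sum_le_sum_of_subset_of_nonneg (Finset.filter_subset _ _)
        fun _ _ _ => (Real.exp_pos _).le)
    apply Real.exp_le_exp.2
    rw [mul_assoc]
    have := (Finset.mem_filter.1 hn).2
    have : 0 < t := by positivity
    nlinarith
  have h := low.trans key
  rw [← le_div_iff₀ (Real.exp_pos _)] at h
  refine h.trans (le_of_eq ?_)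
  rw [mul_pow, ← Real.exp_nat_mul, mul_div_assoc, ← Real.exp_sub]
  congr 2
  rw [ht]; ring

lemma ce_bad (M s q : ℕ) (hs : s < M) (ε : ℝ) (he : 0 < ε) (he1 : ε ≤ 1) :
    (((Finset.range (M ^ q)).filter (fun n => ε * q < |ceT M s q n - q / M|)).card : ℝ)
      ≤ 2 * (M ^ q * Real.exp (- (ε ^ 2 / 4) * q)) := by
  have h1 := ce_tail M s q hs ε 1 he he1 (by simp)
  have h2 := ce_tail M s q hs ε (-1) he he1 (by simp)
  have : (Finset.range (M ^ q)).filter (fun n => ε * q < |ceT M s q n - q / M|) ⊆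
     (Finset.range (M ^ q)).filter (fun n => ε * q < 1 * (ceT M s q n - q / M)) ∪
     (Finset.range (M ^ q)).filter (fun n => ε * q < (-1) * (ceT M s q n - q / M)) := by
    intro n
    simp only [Finset.mem_union, Finset.mem_filter]
    rintro ⟨h, h'⟩
    rcases lt_abs.1 h' with h' | h'
    · left; exact ⟨h, by linarith⟩
    · right; exact ⟨h, by linarith⟩
  have h3 := (Finset.card_le_card this).trans (Finset.card_union_le _ _)
  have h4 : (_ : ℝ) ≤ _ := Nat.cast_le.2 h3
  push_cast at h4
  linarith
lemma ce_nu_le (u σ : List ℕ) : nu u σ ≤ u.length := by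
  unfold nu
  exact (Finset.card_filter_le _ _).trans (by simp)

lemma ce_nu_append_ge (u v σ : List ℕ) : nu u σ + nu v σ ≤ nu (u ++ v) σ := by
  unfold nu
  rw [List.length_append, Finset.range_eq_Ico, Finset.range_eq_Ico, Finset.range_eq_Ico,
    ← Finset.Ico_union_Ico_eq_Ico (Nat.zero_le u.length) (Nat.le_add_right _ v.length),
    Finset.filter_union, Finset.card_union_of_disjoint]
  · gcongr ?_ + ?_
    · apply Finset.card_le_card
      intro i
      simp only [Finset.mem_filter, Finset.mem_Ico]
      rintro ⟨h, h'⟩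
      refine ⟨h, ?_⟩
      rw [List.drop_append_of_le_length h.2.le]
      exact h'.trans (List.prefix_append _ _)
    · refine Finset.card_le_card_of_injOn (fun i => u.length + i) ?_ ?_
      · intro i
        simp only [Finset.coe_filter, Finset.mem_Ico, Set.mem_ofPred_eq]
        rintro ⟨h, h'⟩
        refine ⟨by omega, ?_⟩
        rw [List.drop_length_add_append]
        exact h'
      · intro a _ b _ h
        simpa using h
  · apply Finset.disjoint_filter_filter
    exact Finset.Ico_disjoint_Ico_consecutive _ _ _

lemma ce_nu_append_le (u v σ : List ℕ) : nu (u ++ v) σ ≤ nu u σ + nu v σ + σ.length := by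
  unfold nu
  have : (Finset.range (u ++ v).length).filter (fun i => σ <+: (u ++ v).drop i) ⊆
      ((Finset.range u.length).filter (fun i => σ <+: u.drop i) ∪
      ((Finset.range v.length).filter (fun i => σ <+: v.drop i)).image (fun i => u.length + i)) ∪
      Finset.Ico (u.length - σ.length) u.length := by
    intro i
    simp only [Finset.mem_union, Finset.mem_filter, Finset.mem_range, Finset.mem_image,
      Finset.mem_Ico, List.length_append]
    rintro ⟨h, h'⟩
    by_cases h1 : u.length ≤ i
    · left; right
      obtain ⟨j, rfl⟩ := Nat.exists_eq_add_of_le h1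
      rw [List.drop_length_add_append] at h'
      exact ⟨j, ⟨by omega, h'⟩, rfl⟩
    · by_cases h2 : u.length - σ.length ≤ i
      · right; omega
      · left; left
        refine ⟨by omega, ?_⟩
        rw [List.drop_append_of_le_length (by omega)] at h'
        refine List.prefix_of_prefix_length_le h' (List.prefix_append _ _) ?_
        rw [List.length_drop]; omega
  refine (Finset.card_le_card this).trans ((Finset.card_union_le _ _).trans ?_)
  refine Nat.add_le_add ?_ ?_
  · refine (Finset.card_union_le _ _).trans (Nat.add_le_add le_rfl Finset.card_image_le)
  · rw [Nat.card_Ico]; omega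

lemma ce_prefix_iff (σ : List ℕ) (hd : ∀ d ∈ σ, d < 10) (a i : ℕ)
    (h : i + σ.length ≤ (Nat.digits 10 a).length) :
    σ <+: (digs 10 a).drop i ↔
      a / 10 ^ ((Nat.digits 10 a).length - σ.length - i) % 10 ^ σ.length
        = Nat.ofDigits 10 σ.reverse := by
  set m := (Nat.digits 10 a).length with hm
  set k := σ.length with hk
  have e1 : ((digs 10 a).drop i).take k = (((Nat.digits 10 a).drop (m - k - i)).take k).reverse := by
    unfold digs
    rw [List.drop_reverse, List.take_reverse, List.drop_take, List.length_take]
    congr 2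
    all_goals first | omega | (congr 1; omega)
  have e2 : a / 10 ^ (m - k - i) % 10 ^ k
      = Nat.ofDigits 10 (((Nat.digits 10 a).drop (m - k - i)).take k) := by
    rw [Nat.self_div_pow_eq_ofDigits_drop _ _ (by norm_num),
      Nat.ofDigits_mod_pow_eq_ofDigits_take _ (by norm_num)]
    intro d hd
    exact Nat.digits_lt_base (by norm_num) (List.mem_of_mem_drop hd)
  rw [List.prefix_iff_eq_take, ← hk, e1, e2]
  constructor
  · intro h
    rw [h, List.reverse_reverse]
  · intro h
    have := Nat.ofDigits_inj_of_len_eq (b := 10) (by norm_num) (L1 := ((Nat.digits 10 a).drop (m - k - i)).take k) (L2 := σ.reverse) ?_ ?_ ?_ h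
    · rw [this, List.reverse_reverse]
    · simp; omega
    · intro d hd
      exact Nat.digits_lt_base (by norm_num) (List.mem_of_mem_drop (List.mem_of_mem_take hd))
    · intro d h; exact hd d (by simpa using h)

/-- count of positions -/
def ceC (k s L a : ℕ) : ℕ := ((Finset.range L).filter (fun i => a / 10 ^ i % 10 ^ k = s)).card

lemma ce_nu_digs (σ : List ℕ) (hd : ∀ d ∈ σ, d < 10) (hσ : σ ≠ []) (a : ℕ) :
    nu (digs 10 a) σ ≤ ceC σ.length (Nat.ofDigits 10 σ.reverse) (Nat.digits 10 a).length a ∧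
    ceC σ.length (Nat.ofDigits 10 σ.reverse) (Nat.digits 10 a).length a
      ≤ nu (digs 10 a) σ + σ.length := by
  have hk : 0 < σ.length := List.length_pos_iff.2 hσ
  have hl : (digs 10 a).length = (Nat.digits 10 a).length := by simp [digs]
  have hpre : ∀ i, i < (digs 10 a).length → σ <+: (digs 10 a).drop i →
      i + σ.length ≤ (Nat.digits 10 a).length := by
    intro i hi h
    have := h.length_le
    rw [List.length_drop, hl] at this
    omega
  unfold nu ceC
  set m := (Nat.digits 10 a).length with hm
  constructor
  · refine Finset.card_le_card_of_injOn (fun i => m - σ.length - i) ?_ ?_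
    · intro i
      simp only [Finset.coe_filter, Finset.mem_range, Set.mem_ofPred_eq]
      rintro ⟨h, h'⟩
      have h2 := hpre i h h'
      exact ⟨by omega, (ce_prefix_iff σ hd a i h2).1 h'⟩
    · intro i hi j hj hij
      simp only [Finset.coe_filter, Finset.mem_range, Set.mem_ofPred_eq] at hi hj
      have h2 := hpre i hi.1 hi.2
      have h3 := hpre j hj.1 hj.2
      simp only at hij
      omega
  · have : (Finset.range m).filter (fun i => a / 10 ^ i % 10 ^ σ.length = Nat.ofDigits 10 σ.reverse)
      ⊆ ((Finset.range (digs 10 a).length).filter (fun i => σ <+: (digs 10 a).drop i)).image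
          (fun i => m - σ.length - i) ∪ Finset.Ico (m - σ.length) m := by
      intro j
      simp only [Finset.mem_union, Finset.mem_filter, Finset.mem_range, Finset.mem_image,
        Finset.mem_Ico]
      rintro ⟨h, h'⟩
      by_cases h2 : m - σ.length ≤ j
      · right; omega
      · left
        refine ⟨m - σ.length - j, ⟨by omega, ?_⟩, by omega⟩
        rw [ce_prefix_iff σ hd a _ (by omega)]
        rw [← h']
        congr 3
        omega
    refine (Finset.card_le_card this).trans ((Finset.card_union_le _ _).trans ?_)
    refine Nat.add_le_add Finset.card_image_le ?_
    rw [Nat.card_Ico]; omega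
lemma ceC_eq (k s Q a : ℕ) :
    (ceC k s (Q * k) a : ℝ) = ∑ r ∈ Finset.range k, ceT (10 ^ k) s Q (a / 10 ^ r) := by
  unfold ceC ceT
  rw [Finset.card_filter]
  push_cast
  rw [ce_sum_mul, Finset.sum_comm]
  refine Finset.sum_congr rfl fun r _ => Finset.sum_congr rfl fun b _ => ?_
  have : a / 10 ^ (b * k + r) = a / 10 ^ r / (10 ^ k) ^ b := by
    rw [Nat.div_div_eq_div_mul, ← pow_mul, ← pow_add]
    congr 2; ring
  rw [this]

lemma ceC_mono (k s L L' a : ℕ) (h : L ≤ L') : ceC k s L a ≤ ceC k s L' a := by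
  unfold ceC
  apply Finset.card_le_card
  apply Finset.filter_subset_filter
  simpa using h

lemma ceC_add (k s L d a : ℕ) : ceC k s (L + d) a ≤ ceC k s L a + d := by
  induction d with
  | zero => simp
  | succ d ih =>
    have : ceC k s (L + (d + 1)) a ≤ ceC k s (L + d) a + 1 := by
      unfold ceC
      rw [← add_assoc, Finset.range_add_one, Finset.filter_insert]
      split_ifs
      · exact Finset.card_insert_le _ _
      · omega
    omega

/-- the number a is bad -/
def ceBad (σ : List ℕ) (ε : ℝ) (a : ℕ) : Prop :=
  ε * (Nat.digits 10 a).length + 4 * σ.length <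
    |(nu (digs 10 a) σ : ℝ) - (Nat.digits 10 a).length / 10 ^ σ.length|

lemma ce_ofDigits_lt (σ : List ℕ) (hd : ∀ d ∈ σ, d < 10) :
    Nat.ofDigits 10 σ.reverse < 10 ^ σ.length := by
  have := Nat.ofDigits_lt_base_pow_length (b := 10) (l := σ.reverse) (by norm_num)
    (fun x hx => hd x (by simpa using hx))
  simpa using this

lemma ce_bad_imp (σ : List ℕ) (hd : ∀ d ∈ σ, d < 10) (hσ : σ ≠ []) (ε : ℝ) (he : 0 < ε)
    (he1 : ε ≤ 1) (a m : ℕ) (hm : (Nat.digits 10 a).length = m) (hb : ceBad σ ε a) :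
    ∃ r < σ.length, ε * ((m / σ.length + 1 : ℕ) : ℝ) <
      |ceT (10 ^ σ.length) (Nat.ofDigits 10 σ.reverse) (m / σ.length + 1) (a / 10 ^ r)
        - ((m / σ.length + 1 : ℕ) : ℝ) / ((10 ^ σ.length : ℕ) : ℝ)| := by
  by_contra! hcon
  have hk : 0 < σ.length := List.length_pos_iff.2 hσ
  obtain ⟨h1, h2⟩ := ce_nu_digs σ hd hσ a
  unfold ceBad at hb
  rw [hm] at h1 h2 hb
  set k := σ.length with hkdef
  set s := Nat.ofDigits 10 σ.reverse
  set Q := m / k + 1 with hQ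
  have hQ1 : m ≤ Q * k := by
    have := Nat.lt_div_mul_add hk (a := m); rw [hQ, add_mul]; omega
  have hQ2 : Q * k ≤ m + k := by
    have := Nat.div_mul_le_self m k; rw [hQ, add_mul]; omega
  have h3 := ceC_mono k s _ _ a hQ1
  have h4 := ceC_add k s m (Q * k - m) a
  rw [Nat.add_sub_cancel' hQ1] at h4
  have h5 : ceC k s (Q * k) a ≤ ceC k s m a + k := by omega
  have h6 : |(ceC k s (Q * k) a : ℝ) - Q * k / (10:ℝ) ^ k| ≤ ε * Q * k := by
    rw [ceC_eq]
    have : (Q : ℝ) * k / (10:ℝ) ^ k = ∑ r ∈ Finset.range k, (Q : ℝ) / ((10 ^ k : ℕ) : ℝ) := by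
      simp; ring
    rw [this, ← Finset.sum_sub_distrib]
    refine (Finset.abs_sum_le_sum_abs _ _).trans ?_
    refine (Finset.sum_le_sum fun r hr => hcon r (Finset.mem_range.1 hr)).trans ?_
    simp; linarith
  have c1 : (nu (digs 10 a) σ : ℝ) ≤ ceC k s (Q * k) a := by exact_mod_cast h1.trans h3
  have c2 : (ceC k s (Q * k) a : ℝ) ≤ nu (digs 10 a) σ + 2 * k := by
    have : ceC k s (Q * k) a ≤ nu (digs 10 a) σ + 2 * k := by omega
    exact_mod_cast this
  have c3 : (m : ℝ) ≤ Q * k := by exact_mod_cast hQ1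
  have c4 : (Q : ℝ) * k ≤ m + k := by exact_mod_cast hQ2
  have hkp : (0:ℝ) < k := by exact_mod_cast hk
  have hM : (1:ℝ) ≤ (10:ℝ) ^ k := one_le_pow₀ (by norm_num)
  have c5 : (m : ℝ) / 10 ^ k ≤ Q * k / 10 ^ k := by gcongr
  have c6 : (Q : ℝ) * k / 10 ^ k ≤ m / 10 ^ k + k := by
    have : (Q : ℝ) * k / 10 ^ k ≤ (m + k) / 10 ^ k := by gcongr
    have h' : (k : ℝ) / 10 ^ k ≤ k := div_le_self hkp.le hM
    rw [add_div] at this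
    linarith
  have c7 : ε * Q * k ≤ ε * m + k := by
    have : ε * (Q * k) ≤ ε * (m + k) := by gcongr
    nlinarith
  have := abs_le.1 h6
  rcases lt_abs.1 hb with h | h <;> linarith

lemma ce_badcount (σ : List ℕ) (hd : ∀ d ∈ σ, d < 10) (hσ : σ ≠ []) (ε : ℝ) (he : 0 < ε)
    (he1 : ε ≤ 1) (m : ℕ) [DecidablePred (ceBad σ ε)] :
    (((Finset.range (10 ^ m)).filter
      (fun a => (Nat.digits 10 a).length = m ∧ ceBad σ ε a)).card : ℝ)
      ≤ (2 * σ.length * (10 ^ σ.length) ^ 2) *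
        (10 * Real.exp (-(ε ^ 2 / (4 * σ.length)))) ^ m := by
  have hk : 0 < σ.length := List.length_pos_iff.2 hσ
  have hs := ce_ofDigits_lt σ hd
  have himp := fun a => ce_bad_imp σ hd hσ ε he he1 a m
  set k := σ.length with hkdef
  set s := Nat.ofDigits 10 σ.reverse
  set Q := m / k + 1 with hQ
  have hQ1 : m ≤ Q * k := by
    have := Nat.lt_div_mul_add hk (a := m); rw [hQ, add_mul]; omega
  have hQ2 : Q * k ≤ m + k := by
    have := Nat.div_mul_le_self m k; rw [hQ, add_mul]; omega
  set B := (Finset.range ((10 ^ k) ^ Q)).filter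
    (fun n => ε * Q < |ceT (10 ^ k) s Q n - Q / ((10 ^ k : ℕ) : ℝ)|) with hB
  have hBc : (B.card : ℝ) ≤ _ := ce_bad (10 ^ k) s Q hs ε he he1
  have hpowle : 10 ^ m ≤ (10 ^ k) ^ Q := by
    rw [← pow_mul]; apply Nat.pow_le_pow_right (by norm_num); rw [mul_comm]; exact hQ1
  have hsub : (Finset.range (10 ^ m)).filter
      (fun a => (Nat.digits 10 a).length = m ∧ ceBad σ ε a) ⊆
      (Finset.range k).biUnion
        (fun r => (Finset.range (10 ^ m)).filter (fun a => a / 10 ^ r ∈ B)) := by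
    intro a
    simp only [Finset.mem_filter, Finset.mem_range, Finset.mem_biUnion]
    rintro ⟨h, h1, h2⟩
    obtain ⟨r, hr, h3⟩ := himp a h1 h2
    refine ⟨r, hr, h, ?_⟩
    rw [hB, Finset.mem_filter, Finset.mem_range]
    exact ⟨((Nat.div_le_self _ _).trans_lt h).trans_le hpowle, h3⟩
  have hfib : ∀ r ∈ Finset.range k,
      ((Finset.range (10 ^ m)).filter (fun a => a / 10 ^ r ∈ B)).card ≤ B.card * 10 ^ k := by
    intro r hr
    have hr : r < k := Finset.mem_range.1 hr
    have : ((Finset.range (10 ^ m)).filter (fun a => a / 10 ^ r ∈ B)).card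
        ≤ (B ×ˢ Finset.range (10 ^ r)).card := by
      refine Finset.card_le_card_of_injOn (fun a => (a / 10 ^ r, a % 10 ^ r)) ?_ ?_
      · intro a ha
        have := (Finset.mem_filter.1 (Finset.mem_coe.1 ha)).2
        rw [Finset.mem_coe, Finset.mem_product]
        exact ⟨this, Finset.mem_range.2 (Nat.mod_lt _ (by positivity))⟩
      · intro a _ b _ hab
        simp only [Prod.mk.injEq] at hab
        rw [← Nat.div_add_mod a (10 ^ r), ← Nat.div_add_mod b (10 ^ r), hab.1, hab.2]
    refine this.trans ?_
    rw [Finset.card_product, Finset.card_range]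
    exact Nat.mul_le_mul_left _ (Nat.pow_le_pow_right (by norm_num) hr.le)
  have hc := (Finset.card_le_card hsub).trans (Finset.card_biUnion_le_card_mul _ _ _ hfib)
  rw [Finset.card_range] at hc
  have hc' : (_ : ℝ) ≤ _ := Nat.cast_le.2 hc
  refine hc'.trans ?_
  push_cast at hBc ⊢
  have hkp : (0:ℝ) < k := by exact_mod_cast hk
  have e1 : ((10:ℝ) ^ k) ^ Q ≤ 10 ^ k * 10 ^ m := by
    rw [← pow_mul, ← pow_add]
    apply pow_le_pow_right₀ (by norm_num); rw [mul_comm]; omega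
  have e2 : Real.exp (-(ε ^ 2 / 4) * Q) ≤ Real.exp (-(ε ^ 2 / (4 * k))) ^ m := by
    rw [← Real.exp_nat_mul]
    apply Real.exp_le_exp.2
    have c3 : (m : ℝ) ≤ Q * k := by exact_mod_cast hQ1
    have : (m : ℝ) * -(ε ^ 2 / (4 * k)) = -(ε ^ 2 / 4) * (m / k) := by field_simp
    rw [this]
    have : (m : ℝ) / k ≤ Q := by rwa [div_le_iff₀ hkp]
    have : 0 < ε ^ 2 / 4 := by positivity
    nlinarith
  calc (k : ℝ) * (B.card * 10 ^ k)
      ≤ k * ((2 * (((10:ℝ) ^ k * 10 ^ m) * Real.exp (-(ε ^ 2 / (4 * k))) ^ m)) * 10 ^ k) := by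
        gcongr
        refine hBc.trans ?_
        gcongr
    _ = _ := by rw [mul_pow]; ring
/-- digit length of the n-th prime -/
noncomputable def ceL (n : ℕ) : ℕ := (Nat.digits 10 (Nat.nth Nat.Prime n)).length

lemma ce_prime (n : ℕ) : (Nat.nth Nat.Prime n).Prime := Nat.prime_nth_prime n

lemma ceL_pos (n : ℕ) : 0 < ceL n := by
  unfold ceL
  rw [List.length_pos_iff, ne_eq, Nat.digits_eq_nil_iff_eq_zero]
  exact (ce_prime n).ne_zero

lemma ceL_mono : Monotone ceL := by
  intro a b h
  apply Nat.le_length_digits_le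
  exact Nat.nth_monotone Nat.infinite_setOfPred_prime h

lemma ce_lt_pow (n : ℕ) : Nat.nth Nat.Prime n < 10 ^ ceL n :=
  Nat.lt_base_pow_length_digits (by norm_num)

lemma ce_pow_le (n : ℕ) : 10 ^ (ceL n - 1) ≤ Nat.nth Nat.Prime n := by
  have h2 : 10 ^ ceL n ≤ 10 * Nat.nth Nat.Prime n :=
    Nat.base_pow_length_digits_le 10 _ (by norm_num) (ce_prime n).ne_zero
  have := ceL_pos n
  obtain ⟨t, ht⟩ : ∃ t, ceL n = t + 1 := ⟨ceL n - 1, by omega⟩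
  rw [ht] at h2 ⊢
  rw [pow_succ] at h2
  simp only [Nat.add_sub_cancel]
  omega

lemma ceL_tendsto : Tendsto ceL atTop atTop := by
  apply tendsto_atTop_atTop_of_monotone ceL_mono
  intro b
  refine ⟨10 ^ b, ?_⟩
  by_contra! h
  have h1 := ce_lt_pow (10 ^ b)
  have h2 : 10 ^ b ≤ Nat.nth Nat.Prime (10 ^ b) :=
    (Nat.nth_strictMono Nat.infinite_setOfPred_prime).le_apply
  have h3 : 10 ^ ceL (10 ^ b) ≤ 10 ^ b := Nat.pow_le_pow_right (by norm_num) h.le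
  omega

lemma ce_pi (n : ℕ) : (10:ℝ) ^ ceL n ≤ 200 * ceL n * (n + 1) := by
  have hp := ceL_pos n
  have hle := ce_pow_le n
  obtain ⟨t, ht⟩ : ∃ t, ceL n = t + 1 := ⟨ceL n - 1, by omega⟩
  rw [ht] at hle ⊢
  simp only [Nat.add_sub_cancel] at hle
  have hn : (0:ℝ) ≤ n := Nat.cast_nonneg n
  rcases Nat.eq_zero_or_pos t with rfl | ht0
  · simp; nlinarith
  have hpi : Nat.primeCounting (10 ^ t) ≤ n + 1 := by
    unfold Nat.primeCounting
    calc Nat.primeCounting' (10 ^ t + 1)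
        ≤ Nat.primeCounting' (Nat.nth Nat.Prime n + 1) := Nat.monotone_primeCounting' (by omega)
      _ = n + 1 := by
        unfold Nat.primeCounting'
        rw [Nat.count_succ, Nat.count_nth_of_infinite Nat.infinite_setOfPred_prime,
          if_pos (ce_prime n)]
  have h1 := (Chebyshev.psi_ge (10 ^ t)).trans (Chebyshev.psi_le_primeCounting_mul_log (10 ^ t))
  push_cast at h1
  rw [Real.log_pow] at h1
  have hpi' : (Nat.primeCounting (10 ^ t) : ℝ) ≤ n + 1 := by exact_mod_cast hpi
  set N : ℝ := (10:ℝ) ^ t with hN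
  have hN10 : (10:ℝ) ≤ N := by
    calc (10:ℝ) = 10 ^ 1 := by norm_num
      _ ≤ _ := pow_le_pow_right₀ (by norm_num) ht0
  have hl2 := Real.log_two_gt_d9
  have hl2' := Real.log_two_lt_d9
  have hl4 : Real.log 4 = 2 * Real.log 2 := by
    rw [show (4:ℝ) = 2 ^ 2 by norm_num, Real.log_pow]; norm_num
  have hlog : Real.log (N + 1) ≤ (N + 1) / 4 - 1 + 2 * Real.log 2 := by
    have := Real.log_le_sub_one_of_pos (x := (N + 1) / 4) (by linarith)
    rw [Real.log_div (by linarith) (by norm_num), hl4] at this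
    linarith
  have hl10 : Real.log 10 ≤ 4 := by
    have : Real.log 10 ≤ Real.log (2 ^ 4) := Real.log_le_log (by norm_num) (by norm_num)
    rw [Real.log_pow] at this
    push_cast at this
    linarith
  have hN4 : N / 4 ≤ N * Real.log 2 - Real.log (N + 1) := by nlinarith
  have h2 : (Nat.primeCounting (10 ^ t) : ℝ) * (t * Real.log 10) ≤ (n + 1) * (t * 4) := by
    have : 0 ≤ Real.log 10 := Real.log_nonneg (by norm_num)
    gcongr
  rw [pow_succ, ← hN]
  push_cast
  nlinarith
/-- concatenation of first n primes -/
noncomputable def ceW (n : ℕ) : List ℕ :=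
  ((List.range n).map (fun j => digs 10 (Nat.nth Nat.Prime j))).flatten

lemma ceW_succ (n : ℕ) : ceW (n + 1) = ceW n ++ digs 10 (Nat.nth Nat.Prime n) := by
  simp [ceW, List.range_succ]

lemma ce_digs_len (n : ℕ) : (digs 10 (Nat.nth Nat.Prime n)).length = ceL n := by
  simp [digs, ceL]

lemma ceW_len (n : ℕ) : (ceW n).length = ∑ j ∈ Finset.range n, ceL j := by
  induction n with
  | zero => simp [ceW]
  | succ n ih => rw [ceW_succ, List.length_append, ih, ce_digs_len, Finset.sum_range_succ]

lemma ceW_prefix {a b : ℕ} (h : a ≤ b) : ceW a <+: ceW b := by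
  induction b, h using Nat.le_induction with
  | base => exact List.prefix_rfl
  | succ b _ ih => rw [ceW_succ]; exact ih.trans (List.prefix_append _ _)

lemma ce_le_len (n : ℕ) : n ≤ (ceW n).length := by
  induction n with
  | zero => simp
  | succ n ih => rw [ceW_succ, List.length_append, ce_digs_len]; have := ceL_pos n; omega

lemma ce_concat_eq (N : ℕ) :
    concatDigit 10 (fun n => Nat.nth Nat.Prime (n - 1)) N = (ceW (N + 1)).getD N 0 := by
  simp [concatDigit, ceW]

lemma ce_take (N n : ℕ) (h : N ≤ (ceW n).length) :
    (List.range N).map (concatDigit 10 (fun n => Nat.nth Nat.Prime (n - 1))) = (ceW n).take N := by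
  apply List.ext_getElem
  · simp [h]
  · intro i h1 h2
    simp only [List.length_map, List.length_range] at h1
    rw [List.getElem_map, List.getElem_range, List.getElem_take, ce_concat_eq]
    have hi : i < (ceW (i + 1)).length := ce_le_len (i + 1)
    rw [List.getD_eq_getElem _ _ hi]
    have hi2 : i < (ceW n).length := by omega
    rcases le_total (i + 1) n with hh | hh
    · exact (ceW_prefix hh).getElem hi
    · exact ((ceW_prefix hh).getElem hi2).symm

/-- error of one prime -/
noncomputable def ceErr (σ : List ℕ) (j : ℕ) : ℝ :=
  |(nu (digs 10 (Nat.nth Nat.Prime j)) σ : ℝ) - ceL j / 10 ^ σ.length|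

lemma ce_W_err (σ : List ℕ) (n : ℕ) :
    |(nu (ceW n) σ : ℝ) - (ceW n).length / 10 ^ σ.length|
      ≤ ∑ j ∈ Finset.range n, ceErr σ j + σ.length * n := by
  induction n with
  | zero => simp [ceW, nu]
  | succ n ih =>
    have h1 := ce_nu_append_ge (ceW n) (digs 10 (Nat.nth Nat.Prime n)) σ
    have h2 := ce_nu_append_le (ceW n) (digs 10 (Nat.nth Nat.Prime n)) σ
    rw [Finset.sum_range_succ, ceW_succ, List.length_append, ce_digs_len]
    have h1' : (_ : ℝ) ≤ _ := Nat.cast_le.2 h1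
    have h2' : (_ : ℝ) ≤ _ := Nat.cast_le.2 h2
    push_cast at h1' h2' ⊢
    have h3 : |(nu (digs 10 (Nat.nth Nat.Prime n)) σ : ℝ) - ceL n / 10 ^ σ.length| ≤ ceErr σ n :=
      le_rfl
    rw [add_div]
    rw [abs_le] at ih h3 ⊢
    have : (0:ℝ) ≤ σ.length := Nat.cast_nonneg _
    constructor <;> linarith [ih.1, ih.2, h3.1, h3.2]

open Classical in
lemma ce_err_le (σ : List ℕ) (ε : ℝ) (he : 0 < ε) (j : ℕ) :
    ceErr σ j ≤ ε * ceL j + 4 * σ.length +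
      (if ceBad σ ε (Nat.nth Nat.Prime j) then (ceL j : ℝ) else 0) := by
  split_ifs with h
  · have h1 := ce_nu_le (digs 10 (Nat.nth Nat.Prime j)) σ
    rw [ce_digs_len] at h1
    have h1' : (nu (digs 10 (Nat.nth Nat.Prime j)) σ : ℝ) ≤ ceL j := Nat.cast_le.2 h1
    have h0 : (0:ℝ) ≤ nu (digs 10 (Nat.nth Nat.Prime j)) σ := Nat.cast_nonneg _
    have h2 : (ceL j : ℝ) / 10 ^ σ.length ≤ ceL j :=
      div_le_self (Nat.cast_nonneg _) (one_le_pow₀ (by norm_num))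
    have h3 : (0:ℝ) ≤ ceL j / 10 ^ σ.length := by positivity
    have h4 : (0:ℝ) ≤ ε * ceL j + 4 * σ.length := by positivity
    have : ceErr σ j ≤ ceL j := by
      unfold ceErr
      rw [abs_le]; constructor <;> linarith
    linarith
  · unfold ceBad at h
    rw [not_lt] at h
    simpa [ceErr, ceL] using h

open Classical in
lemma ce_bad_sum (σ : List ℕ) (hd : ∀ d ∈ σ, d < 10) (hσ : σ ≠ []) (ε : ℝ) (he : 0 < ε)
    (he1 : ε ≤ 1) (n : ℕ) :
    ∑ j ∈ Finset.range n, (if ceBad σ ε (Nat.nth Nat.Prime j) then (ceL j : ℝ) else 0)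
     ≤ ceL n * ((ceL n + 1) * ((2 * σ.length * (10 ^ σ.length) ^ 2) *
        (10 * Real.exp (-(ε ^ 2 / (4 * σ.length)))) ^ ceL n)) := by
  have hk : 0 < σ.length := List.length_pos_iff.2 hσ
  have hcnt := ce_badcount σ hd hσ ε he he1
  set k := σ.length with hkdef
  set D : ℝ := 2 * k * (10 ^ k) ^ 2
  set R : ℝ := 10 * Real.exp (-(ε ^ 2 / (4 * k))) with hR
  have hkp : (1:ℝ) ≤ k := by exact_mod_cast hk
  have hR1 : 1 ≤ R := by
    have h1 := Real.add_one_le_exp (-(ε ^ 2 / (4 * k)))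
    have h2 : ε ^ 2 / (4 * k) ≤ 1 / 2 := by
      rw [div_le_iff₀ (by positivity)]; nlinarith
    linarith
  have hD : 0 ≤ D := by positivity
  set m := ceL n with hm
  have step1 : ∑ j ∈ Finset.range n, (if ceBad σ ε (Nat.nth Nat.Prime j) then (ceL j : ℝ) else 0)
      ≤ m * (((Finset.range n).filter (fun j => ceBad σ ε (Nat.nth Nat.Prime j))).card : ℝ) := by
    rw [← Finset.sum_filter, mul_comm, ← nsmul_eq_mul, ← Finset.sum_const]
    refine Finset.sum_le_sum fun j hj => ?_
    have := Finset.mem_range.1 (Finset.mem_filter.1 hj).1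
    exact_mod_cast ceL_mono this.le
  refine step1.trans ?_
  gcongr
  have step2 : ((Finset.range n).filter (fun j => ceBad σ ε (Nat.nth Nat.Prime j))).card ≤
     ((Finset.range (m + 1)).biUnion (fun i => (Finset.range (10 ^ i)).filter
      (fun a => (Nat.digits 10 a).length = i ∧ ceBad σ ε a))).card := by
    refine Finset.card_le_card_of_injOn (fun j => Nat.nth Nat.Prime j) ?_ ?_
    · intro j hj
      have hj := Finset.mem_filter.1 (Finset.mem_coe.1 hj)
      have hjn := Finset.mem_range.1 hj.1
      rw [Finset.mem_coe, Finset.mem_biUnion]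
      refine ⟨ceL j, Finset.mem_range.2 (Nat.lt_succ_of_le (ceL_mono hjn.le)), ?_⟩
      rw [Finset.mem_filter, Finset.mem_range]
      exact ⟨ce_lt_pow j, rfl, hj.2⟩
    · exact (Nat.nth_injective Nat.infinite_setOfPred_prime).injOn
  have step3 := step2.trans Finset.card_biUnion_le
  have step3' : (_ : ℝ) ≤ _ := Nat.cast_le.2 step3
  refine step3'.trans ?_
  push_cast
  calc _ ≤ ∑ i ∈ Finset.range (m + 1), D * R ^ m := by
        refine Finset.sum_le_sum fun i hi => (hcnt i).trans ?_
        have := Finset.mem_range.1 hi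
        gcongr
        omega
    _ = _ := by simp

open Classical in
lemma ce_bad_small (σ : List ℕ) (hd : ∀ d ∈ σ, d < 10) (hσ : σ ≠ []) (ε : ℝ) (he : 0 < ε)
    (he1 : ε ≤ 1) :
    ∀ᶠ n : ℕ in atTop, 
    ∑ j ∈ Finset.range n, (if ceBad σ ε (Nat.nth Nat.Prime j) then (ceL j : ℝ) else 0)
     ≤ ε * (n + 1) := by
  have hk : 0 < σ.length := List.length_pos_iff.2 hσ
  have hsum := ce_bad_sum σ hd hσ ε he he1
  set k := σ.length with hkdef
  set D : ℝ := 2 * k * (10 ^ k) ^ 2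
  have hkp : (0:ℝ) < k := by exact_mod_cast hk
  have hD : 0 ≤ D := by positivity
  set ρ : ℝ := Real.exp (-(ε ^ 2 / (4 * k))) with hρ
  have hρ0 : 0 < ρ := Real.exp_pos _
  have hρ1 : ρ < 1 := by
    rw [hρ, Real.exp_lt_one_iff]
    have : 0 < ε ^ 2 / (4 * k) := by positivity
    linarith
  have hρa : |ρ| < 1 := by rwa [abs_of_pos hρ0]
  have t3 := tendsto_pow_const_mul_const_pow_of_abs_lt_one 3 hρa
  have t2 := tendsto_pow_const_mul_const_pow_of_abs_lt_one 2 hρa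
  have t := ((t3.add t2).const_mul (200 * D)).comp ceL_tendsto
  simp only [add_zero, mul_zero] at t
  filter_upwards [t.eventually_le_const he] with n hn
  refine (hsum n).trans ?_
  have hpi := ce_pi n
  simp only [Function.comp] at hn
  set m := ceL n
  calc (m : ℝ) * ((m + 1) * (D * (10 * ρ) ^ m))
      = m * ((m + 1) * (D * ρ ^ m)) * 10 ^ m := by rw [mul_pow]; ring
    _ ≤ m * ((m + 1) * (D * ρ ^ m)) * (200 * m * (n + 1)) := by gcongr
    _ = 200 * D * ((m:ℝ) ^ 3 * ρ ^ m + (m:ℝ) ^ 2 * ρ ^ m) * (n + 1) := by ring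
    _ ≤ ε * (n + 1) := by gcongr

lemma ce_L_small (ε : ℝ) (he : 0 < ε) : ∀ᶠ n : ℕ in atTop, (ceL n : ℝ) ≤ ε * (n + 1) := by
  have t2 := tendsto_pow_const_mul_const_pow_of_abs_lt_one 2
    (show |(1/10 : ℝ)| < 1 by rw [abs_of_pos] <;> norm_num)
  have t := (t2.const_mul 200).comp ceL_tendsto
  simp only [mul_zero] at t
  filter_upwards [t.eventually_le_const he] with n hn
  have hpi := ce_pi n
  simp only [Function.comp] at hn
  set m := ceL n
  calc (m : ℝ) = m * (1 / 10) ^ m * 10 ^ m := by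
        rw [mul_assoc, ← mul_pow]; norm_num
    _ ≤ m * (1 / 10) ^ m * (200 * m * (n + 1)) := by gcongr
    _ = 200 * ((m:ℝ) ^ 2 * (1 / 10) ^ m) * (n + 1) := by ring
    _ ≤ ε * (n + 1) := by gcongr

lemma ce_n_small (A : ℕ) : ∀ᶠ n : ℕ in atTop, A * n ≤ (ceW n).length := by
  obtain ⟨n0, h0⟩ := (tendsto_atTop.1 ceL_tendsto (2 * A)).exists_forall_of_atTop
  have h : ∀ d, 2 * A * d ≤ (ceW (n0 + d)).length := by
    intro d
    induction d with
    | zero => simp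
    | succ d ih =>
      rw [← add_assoc, ceW_succ, List.length_append, ce_digs_len]
      have := h0 (n0 + d) (by omega)
      rw [mul_add]; omega
  filter_upwards [eventually_ge_atTop (2 * n0)] with n hn
  obtain ⟨d, rfl⟩ : ∃ d, n = n0 + d := ⟨n - n0, by omega⟩
  refine le_trans ?_ (h d)
  have : n0 ≤ d := by omega
  nlinarith

lemma ce_main (σ : List ℕ) (hd : ∀ d ∈ σ, d < 10) (hσ : σ ≠ []) (ε : ℝ) (he : 0 < ε)
    (he1 : ε ≤ 1) : ∀ᶠ n : ℕ in atTop,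
    |(nu (ceW n) σ : ℝ) - (ceW n).length / 10 ^ σ.length| + 2 * ceL n + σ.length
      ≤ 8 * ε * (ceW n).length := by
  obtain ⟨A, hA⟩ := exists_nat_ge ((6 * σ.length : ℝ) / ε)
  filter_upwards [ce_bad_small σ hd hσ ε he he1, ce_L_small ε he, ce_n_small A,
    eventually_ge_atTop 1] with n h1 h2 h3 h4
  have h5 := ce_W_err σ n
  have h6 : ∑ j ∈ Finset.range n, ceErr σ j ≤ _ :=
    Finset.sum_le_sum fun j _ => ce_err_le σ ε he j
  rw [Finset.sum_add_distrib, Finset.sum_add_distrib, ← Finset.mul_sum] at h6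
  have h7 : ((ceW n).length : ℝ) = ∑ j ∈ Finset.range n, (ceL j : ℝ) := by
    rw [ceW_len]; push_cast; rfl
  rw [← h7] at h6
  simp only [Finset.sum_const, Finset.card_range, nsmul_eq_mul] at h6
  have h3' : (A : ℝ) * n ≤ (ceW n).length := by exact_mod_cast h3
  have h8 : (n : ℝ) ≤ (ceW n).length := by exact_mod_cast ce_le_len n
  have h4' : (1:ℝ) ≤ n := by exact_mod_cast h4
  rw [div_le_iff₀ he] at hA
  set ℓ : ℝ := ((ceW n).length : ℝ)
  set k : ℝ := (σ.length : ℝ)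
  have hk0 : 0 ≤ k := Nat.cast_nonneg _
  have h9 : 6 * k * n ≤ ε * ℓ := by
    calc 6 * k * n ≤ A * ε * n := by gcongr
      _ = ε * (A * n) := by ring
      _ ≤ _ := by gcongr
  have h10 : ε * (n + 1) ≤ 2 * (ε * ℓ) := by nlinarith
  have h11 : k ≤ k * n := by nlinarith
  linarith

/-- The Copeland–Erdős number `0.2357111317…`, formed by concatenating the decimal
expansions of the primes in increasing order, is normal to base `10`.
(Here `a n = Nat.nth Nat.Prime (n - 1)` is the `n`-th prime: `a 1 = 2`, `a 2 = 3`, ….) -/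
theorem copeland_erdos_number_normal :
    IsNormalSeq 10 (concatDigit 10 fun n => Nat.nth Nat.Prime (n - 1)) := by
  intro σ hσ hd
  rw [Metric.tendsto_atTop]
  intro δ hδ
  set ε : ℝ := min 1 (δ / 16) with hε
  have he : 0 < ε := by positivity
  have he1 : ε ≤ 1 := min_le_left _ _
  have he2 : 8 * ε < δ := by
    have : ε ≤ δ / 16 := min_le_right _ _
    linarith
  obtain ⟨n0, h0⟩ := (ce_main σ hd hσ ε he he1).exists_forall_of_atTop
  refine ⟨(ceW n0).length + 1, fun N hN => ?_⟩
  have hex : ∃ n, N < (ceW n).length := ⟨N + 1, ce_le_len (N + 1)⟩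
  classical
  obtain ⟨n, hn1, hn2⟩ : ∃ n, (ceW n).length ≤ N ∧ N < (ceW (n + 1)).length := by
    have hspec := Nat.find_spec hex
    have hne : Nat.find hex ≠ 0 := by
      intro h
      rw [h] at hspec
      simp [ceW] at hspec
    obtain ⟨n, hn⟩ := Nat.exists_eq_succ_of_ne_zero hne
    refine ⟨n, ?_, ?_⟩
    · have := Nat.find_min hex (m := n) (by omega)
      omega
    · rw [hn] at hspec; exact hspec
  have hn0 : n0 ≤ n := by
    by_contra! h
    have := (ceW_prefix (show n + 1 ≤ n0 by omega)).length_le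
    omega
  have hE := h0 n hn0
  rw [ce_take N (n + 1) hn2.le, ceW_succ, List.take_append, List.take_of_length_le hn1]
  set t := (digs 10 (Nat.nth Nat.Prime n)).take (N - (ceW n).length) with ht
  have htl : N = (ceW n).length + t.length := by
    rw [ceW_succ, List.length_append] at hn2
    rw [ht, List.length_take]; omega
  have htL : t.length ≤ ceL n := by
    rw [ht, List.length_take, ce_digs_len]; omega
  have a1 := ce_nu_append_ge (ceW n) t σ
  have a2 := ce_nu_append_le (ceW n) t σ
  have a3 := ce_nu_le t σ
  have b1 : (nu (ceW n) σ : ℝ) ≤ nu (ceW n ++ t) σ := by exact_mod_cast (by omega)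
  have b2 : (nu (ceW n ++ t) σ : ℝ) ≤ nu (ceW n) σ + ceL n + σ.length := by
    have : nu (ceW n ++ t) σ ≤ nu (ceW n) σ + ceL n + σ.length := by omega
    exact_mod_cast this
  have b3 : (N : ℝ) = (ceW n).length + t.length := by exact_mod_cast htl
  have b4 : (t.length : ℝ) ≤ ceL n := by exact_mod_cast htL
  have b5 : (t.length : ℝ) / 10 ^ σ.length ≤ t.length :=
    div_le_self (Nat.cast_nonneg _) (one_le_pow₀ (by norm_num))
  have b6 : (0:ℝ) ≤ (t.length : ℝ) / 10 ^ σ.length := by positivity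
  have b7 : (N : ℝ) / 10 ^ σ.length
      = (ceW n).length / 10 ^ σ.length + t.length / 10 ^ σ.length := by rw [b3, add_div]
  have hNpos : (0:ℝ) < N := by
    have : 0 < N := by omega
    exact_mod_cast this
  have hk0 : (0:ℝ) ≤ σ.length := Nat.cast_nonneg _
  have hL0 : (0:ℝ) ≤ ceL n := Nat.cast_nonneg _
  have hfin : |(nu (ceW n ++ t) σ : ℝ) - N / 10 ^ σ.length| ≤ 8 * ε * N := by
    have c1 : |(nu (ceW n ++ t) σ : ℝ) - N / 10 ^ σ.length| ≤
        |(nu (ceW n) σ : ℝ) - (ceW n).length / 10 ^ σ.length| + 2 * ceL n + σ.length := by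
      have d1 := le_abs_self ((nu (ceW n) σ : ℝ) - (ceW n).length / 10 ^ σ.length)
      have d2 := neg_abs_le ((nu (ceW n) σ : ℝ) - (ceW n).length / 10 ^ σ.length)
      rw [abs_le, b7]
      constructor <;> linarith
    refine (c1.trans hE).trans ?_
    gcongr
  rw [Real.dist_eq]
  have e : (nu (ceW n ++ t) σ : ℝ) / N - 1 / ((10 : ℕ) : ℝ) ^ σ.length
      = ((nu (ceW n ++ t) σ : ℝ) - N / 10 ^ σ.length) / N := by
    push_cast
    field_simp
  rw [e, abs_div, abs_of_pos hNpos, div_lt_iff₀ hNpos]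
  nlinarith
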